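/- Let 𝚫 ∈ 𝒜. Then 𝚫 has no branch relations if and only if there exists a gentle quiver 𝚫'' of tree type, all of whose relations are isolated, such that 𝚫 is isomorphic (as a quiver with relations) to the quiver obtained from 𝚫'' by completing all of its relations. -/

import Mathlib

/-! Common formalization infrastructure for gentle quivers (Bobinski–Buan,
    "Derived equivalence classification of gentle cluster tilted algebras"). -/

/-- A (finite) quiver with (length-two, monomial) relations.  Vertices and
arrows are natural numbers; `V` and `A` are the finite sets of vertices and
arrows, `src`/`tgt` give the start and terminus of each arrow, and `rel` is the
set of relations, a relation `(a, b)` standing for the length-two path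
`a·b` (so `src a = tgt b`). -/
structure QuivRel where
  V : Finset ℕ
  A : Finset ℕ
  src : ℕ → ℕ
  tgt : ℕ → ℕ
  rel : Finset (ℕ × ℕ)

namespace GentleQuiv

/-- Two vertices are adjacent if some arrow joins them (in either direction). -/
def Adj (Q : QuivRel) (x y : ℕ) : Prop :=
  ∃ a ∈ Q.A, (Q.src a = x ∧ Q.tgt a = y) ∨ (Q.src a = y ∧ Q.tgt a = x)

/-- A quiver is connected if any two of its vertices are joined by a walk. -/
def Connected (Q : QuivRel) : Prop :=
  ∀ x ∈ Q.V, ∀ y ∈ Q.V, Relation.ReflTransGen (Adj Q) x y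

/-- `l = [α₁, …, αₙ]` is a (nonempty) path in the quiver: consecutive arrows
compose, i.e. `s αᵢ = t αᵢ₊₁`. -/
def IsPathList (Q : QuivRel) (l : List ℕ) : Prop :=
  l ≠ [] ∧ (∀ a ∈ l, a ∈ Q.A) ∧ l.Chain' (fun a b => Q.src a = Q.tgt b)

/-- The path `l` contains a subpath (two consecutive arrows) lying in `R`. -/
def HasRelSubpath (Q : QuivRel) (l : List ℕ) : Prop :=
  ∃ a b, (a, b) ∈ Q.rel ∧ [a, b] <:+: l

/-- Gentle quiver: connected, relations are composable pairs of arrows, at most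
two arrows in/out of every vertex, the usual gentleness conditions on
relations, and a global bound forcing finite dimensionality. -/
def IsGentle (Q : QuivRel) : Prop :=
  Q.V.Nonempty ∧
  (∀ a ∈ Q.A, Q.src a ∈ Q.V ∧ Q.tgt a ∈ Q.V) ∧
  Connected Q ∧
  (∀ ρ ∈ Q.rel, ρ.1 ∈ Q.A ∧ ρ.2 ∈ Q.A ∧ Q.src ρ.1 = Q.tgt ρ.2) ∧
  (∀ x, (Q.A.filter fun a => Q.src a = x).card ≤ 2) ∧
  (∀ x, (Q.A.filter fun a => Q.tgt a = x).card ≤ 2) ∧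
  (∀ a ∈ Q.A, (Q.A.filter fun b => Q.src b = Q.tgt a ∧ (b, a) ∉ Q.rel).card ≤ 1) ∧
  (∀ a ∈ Q.A, (Q.A.filter fun c => Q.tgt c = Q.src a ∧ (a, c) ∉ Q.rel).card ≤ 1) ∧
  (∀ a ∈ Q.A, (Q.A.filter fun b => (b, a) ∈ Q.rel).card ≤ 1) ∧
  (∀ a ∈ Q.A, (Q.A.filter fun c => (a, c) ∈ Q.rel).card ≤ 1) ∧
  (∃ n : ℕ, ∀ l : List ℕ, IsPathList Q l → l.length = n → HasRelSubpath Q l)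

/-- A choice of functions `σ, τ : Δ₁ → {±1}` as in Avella-Alaminos–Geiss. -/
structure SigmaTau (Q : QuivRel) where
  σ : ℕ → ℤ
  τ : ℕ → ℤ
  σ_pm : ∀ a ∈ Q.A, σ a = 1 ∨ σ a = -1
  τ_pm : ∀ a ∈ Q.A, τ a = 1 ∨ τ a = -1
  σ_src : ∀ a ∈ Q.A, ∀ b ∈ Q.A, a ≠ b → Q.src a = Q.src b → σ a = -σ b
  τ_tgt : ∀ a ∈ Q.A, ∀ b ∈ Q.A, a ≠ b → Q.tgt a = Q.tgt b → τ a = -τ b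
  rel_iff : ∀ a ∈ Q.A, ∀ b ∈ Q.A, Q.src a = Q.tgt b → ((a, b) ∈ Q.rel ↔ σ a = τ b)

/-- A thread: either a trivial path/antipath `1_{x,ε}` at a vertex `x` with a
sign `ε`, or a sequence of arrows of positive length. -/
inductive Thread where
  | triv (x : ℕ) (ε : ℤ) : Thread
  | arrows (l : List ℕ) : Thread
deriving DecidableEq

/-- Source of a thread. -/
def Thread.source (Q : QuivRel) : Thread → ℕ
  | .triv x _ => x
  | .arrows l => Q.src l.getLast!

/-- Target of a thread. -/
def Thread.target (Q : QuivRel) : Thread → ℕ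
  | .triv x _ => x
  | .arrows l => Q.tgt l.head!

/-- `σω` (for paths and antipaths alike; `σ 1_{x,ε} = ε = σ 1'_{x,ε}`). -/
def Thread.sigma {Q : QuivRel} (st : SigmaTau Q) : Thread → ℤ
  | .triv _ ε => ε
  | .arrows l => st.σ l.getLast!

/-- `τω` when `ω` is regarded as a path (`τ 1_{x,ε} = -ε`). -/
def Thread.tauPath {Q : QuivRel} (st : SigmaTau Q) : Thread → ℤ
  | .triv _ ε => -ε
  | .arrows l => st.τ l.head!

/-- `τω` when `ω` is regarded as an antipath (`τ 1'_{x,ε} = ε`). -/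
def Thread.tauAnti {Q : QuivRel} (st : SigmaTau Q) : Thread → ℤ
  | .triv _ ε => ε
  | .arrows l => st.τ l.head!

/-- Length of a thread. -/
def Thread.len : Thread → ℕ
  | .triv _ _ => 0
  | .arrows l => l.length

/-- A path in `𝚫` of positive length (no two consecutive arrows in `R`). -/
def IsPermList (Q : QuivRel) (l : List ℕ) : Prop :=
  IsPathList Q l ∧ l.Chain' (fun a b => (a, b) ∉ Q.rel)

/-- An antipath in `𝚫` of positive length (all consecutive pairs in `R`). -/
def IsAntiList (Q : QuivRel) (l : List ℕ) : Prop :=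
  l ≠ [] ∧ (∀ a ∈ l, a ∈ Q.A) ∧ l.Chain' (fun a b => (a, b) ∈ Q.rel)

/-- A thread is a path in `𝚫` (including trivial ones). -/
def IsPathThread (Q : QuivRel) : Thread → Prop
  | .triv x ε => x ∈ Q.V ∧ (ε = 1 ∨ ε = -1)
  | .arrows l => IsPermList Q l

/-- A thread is an antipath in `𝚫` (including trivial ones). -/
def IsAntiThread (Q : QuivRel) : Thread → Prop
  | .triv x ε => x ∈ Q.V ∧ (ε = 1 ∨ ε = -1)
  | .arrows l => IsAntiList Q l

/-- `w ∈ ℳ`: `w` is a maximal path of `𝚫`. -/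
def InM (Q : QuivRel) (st : SigmaTau Q) (w : Thread) : Prop :=
  IsPathThread Q w ∧
  (¬ ∃ a ∈ Q.A, Q.src a = w.target Q ∧ st.σ a = -(w.tauPath st)) ∧
  (¬ ∃ b ∈ Q.A, Q.tgt b = w.source Q ∧ st.τ b = -(w.sigma st))

/-- `w ∈ 𝒩`: `w` is a maximal antipath of `𝚫`. -/
def InN (Q : QuivRel) (st : SigmaTau Q) (w : Thread) : Prop :=
  IsAntiThread Q w ∧
  (¬ ∃ a ∈ Q.A, Q.src a = w.target Q ∧ st.σ a = w.tauAnti st) ∧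
  (¬ ∃ b ∈ Q.A, Q.tgt b = w.source Q ∧ st.τ b = w.sigma st)

/-- The graph of the bijection `Φ = φ ∘ ψ : 𝒩 → 𝒩`:  `PhiRel Q st w w'` holds
iff `w, w' ∈ 𝒩` and the maximal path `ψ w` (with `s(ψw) = sw`, `σ(ψw) = -σw`)
satisfies `t w' = t (ψ w)` and `τ w' = -τ(ψ w)`, i.e. `w' = φ (ψ w) = Φ w`. -/
def PhiRel (Q : QuivRel) (st : SigmaTau Q) (w w' : Thread) : Prop :=
  InN Q st w ∧ InN Q st w' ∧
  ∃ m : Thread, InM Q st m ∧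
    m.source Q = w.source Q ∧ m.sigma st = -(w.sigma st) ∧
    w'.target Q = m.target Q ∧ w'.tauAnti st = -(m.tauPath st)

/-- `O` is an orbit of the `ℤ`-action on `𝒩` induced by `Φ`. -/
def NOrbit (Q : QuivRel) (st : SigmaTau Q) (O : Set Thread) : Prop :=
  ∃ w, InN Q st w ∧ O = {w' | Relation.EqvGen (PhiRel Q st) w w'}

/-- `p(𝒪) = |𝒪|` for an orbit `𝒪 ∈ 𝒩/ℤ`. -/
noncomputable def pN (O : Set Thread) : ℕ := O.ncard

/-- `q(𝒪) = Σ_{ω ∈ 𝒪} ℓ(ω)` for an orbit `𝒪 ∈ 𝒩/ℤ`. -/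
noncomputable def qN (O : Set Thread) : ℕ := ∑ᶠ w ∈ O, Thread.len w

/-- `a ∈ 𝒞`: the arrow `a` occurs in no maximal antipath. -/
def InC (Q : QuivRel) (st : SigmaTau Q) (a : ℕ) : Prop :=
  a ∈ Q.A ∧ ¬ ∃ l : List ℕ, InN Q st (.arrows l) ∧ a ∈ l

/-- The graph of the bijection `Ψ : 𝒞 → 𝒞`. -/
def PsiRel (Q : QuivRel) (st : SigmaTau Q) (a b : ℕ) : Prop :=
  InC Q st a ∧ InC Q st b ∧ Q.tgt b = Q.src a ∧ st.τ b = st.σ a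

/-- `O` is an orbit of the `ℤ`-action on `𝒞` induced by `Ψ`. -/
def COrbit (Q : QuivRel) (st : SigmaTau Q) (O : Set ℕ) : Prop :=
  ∃ a, InC Q st a ∧ O = {b | Relation.EqvGen (PsiRel Q st) a b}

/-- The Avella-Alaminos–Geiss invariant `f_𝚫 : ℕ² → ℕ`:  `f_𝚫 (p,q)` counts the
orbits `𝒪 ∈ 𝒩/ℤ ⊔ 𝒞/ℤ` with `p(𝒪) = p` and `q(𝒪) = q`. -/
noncomputable def fInv (Q : QuivRel) (st : SigmaTau Q) : ℕ × ℕ → ℕ := fun pq =>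
  {O : Set Thread | NOrbit Q st O ∧ pN O = pq.1 ∧ qN O = pq.2}.ncard +
  {O : Set ℕ | COrbit Q st O ∧ pq.1 = 0 ∧ O.ncard = pq.2}.ncard

/-- `[p, q] : ℕ² → ℕ`, the characteristic function of `{(p, q)}`. -/
def charFn (p q : ℕ) : ℕ × ℕ → ℕ := fun pq => if pq = (p, q) then 1 else 0

/-- Tree type: `|Δ₀| = |Δ₁| + 1`. -/
def TreeType (Q : QuivRel) : Prop := Q.V.card = Q.A.card + 1

/-- Removing a set of arrows (keeping all vertices); relations containing a
removed arrow are discarded. -/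
def deleteArrows (Q : QuivRel) (S : Finset ℕ) : QuivRel where
  V := Q.V
  A := Q.A \ S
  src := Q.src
  tgt := Q.tgt
  rel := Q.rel.filter fun ρ => ρ.1 ∉ S ∧ ρ.2 ∉ S

/-- Branch arrow: removing it disconnects the quiver. -/
def BranchArrow (Q : QuivRel) (a : ℕ) : Prop :=
  a ∈ Q.A ∧ ¬ Connected (deleteArrows Q {a})

/-- Cycle arrow: removing it leaves the quiver connected. -/
def CycleArrow (Q : QuivRel) (a : ℕ) : Prop :=
  a ∈ Q.A ∧ Connected (deleteArrows Q {a})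

/-- Branch relation: a relation one of whose arrows is a branch arrow. -/
def BranchRel (Q : QuivRel) (ρ : ℕ × ℕ) : Prop :=
  ρ ∈ Q.rel ∧ (BranchArrow Q ρ.1 ∨ BranchArrow Q ρ.2)

/-- A relation `ρ = (α, β)` is isolated if the antipath `(α, β)` is a maximal
antipath, i.e. `ρ ∈ 𝒩`. -/
def Isolated (Q : QuivRel) (st : SigmaTau Q) (ρ : ℕ × ℕ) : Prop :=
  ρ ∈ Q.rel ∧ InN Q st (.arrows [ρ.1, ρ.2])

/-- `Q'` is obtained from `Q` by completing the relations from `R₀`, the new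
arrow attached to `ρ ∈ R₀` being `γ ρ`. -/
structure IsCompletion (Q : QuivRel) (R0 : Finset (ℕ × ℕ)) (γ : ℕ × ℕ → ℕ)
    (Q' : QuivRel) : Prop where
  subset : R0 ⊆ Q.rel
  fresh : ∀ ρ ∈ R0, γ ρ ∉ Q.A
  inj : ∀ ρ ∈ R0, ∀ ρ' ∈ R0, γ ρ = γ ρ' → ρ = ρ'
  V_eq : Q'.V = Q.V
  A_eq : Q'.A = Q.A ∪ R0.image γ
  src_old : ∀ a ∈ Q.A, Q'.src a = Q.src a
  tgt_old : ∀ a ∈ Q.A, Q'.tgt a = Q.tgt a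
  src_new : ∀ ρ ∈ R0, Q'.src (γ ρ) = Q.tgt ρ.1
  tgt_new : ∀ ρ ∈ R0, Q'.tgt (γ ρ) = Q.src ρ.2
  rel_eq : Q'.rel = Q.rel ∪ R0.image (fun ρ => (γ ρ, ρ.1)) ∪
      R0.image (fun ρ => (ρ.2, γ ρ))

/-- A 3-cycle: three pairwise distinct arrows forming an oriented cycle. -/
def Is3Cycle (Q : QuivRel) (a0 a1 a2 : ℕ) : Prop :=
  a0 ∈ Q.A ∧ a1 ∈ Q.A ∧ a2 ∈ Q.A ∧ a0 ≠ a1 ∧ a1 ≠ a2 ∧ a0 ≠ a2 ∧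
  Q.src a0 = Q.tgt a1 ∧ Q.src a1 = Q.tgt a2 ∧ Q.src a2 = Q.tgt a0

/-- A triangle: a 3-cycle all of whose three compositions are relations. -/
def IsTriangleTriple (Q : QuivRel) (a0 a1 a2 : ℕ) : Prop :=
  Is3Cycle Q a0 a1 a2 ∧ (a0, a1) ∈ Q.rel ∧ (a1, a2) ∈ Q.rel ∧ (a2, a0) ∈ Q.rel

/-- The (unordered) set of arrows of a triangle. -/
def TriangleSet (Q : QuivRel) (O : Finset ℕ) : Prop :=
  ∃ a0 a1 a2, O = {a0, a1, a2} ∧ IsTriangleTriple Q a0 a1 a2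

/-- Branch triangle: removing any two of its arrows disconnects the quiver. -/
def BranchTriangle (Q : QuivRel) (O : Finset ℕ) : Prop :=
  TriangleSet Q O ∧ ∀ S ⊆ O, S.card = 2 → ¬ Connected (deleteArrows Q S)

/-- Free relation: a relation neither of whose arrows lies in `𝒞`. -/
def FreeRel (Q : QuivRel) (st : SigmaTau Q) (ρ : ℕ × ℕ) : Prop :=
  ρ ∈ Q.rel ∧ ¬ InC Q st ρ.1 ∧ ¬ InC Q st ρ.2

/-- The class `𝒜`: gentle quivers with `f_𝚫 = m·[0,3] + [p+m+2, p]`. -/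
def ClassA (Q : QuivRel) (st : SigmaTau Q) : Prop :=
  IsGentle Q ∧ ∃ m p : ℕ, ∀ x, fInv Q st x = m * charFn 0 3 x + charFn (p + m + 2) p x

/-- The class `Ã`: gentle quivers with
`f_𝚫 = (m₁+m₂)·[0,3] + [p+m₁, p] + [q+m₂, q]`, `p+m₁ > 0`, `q+m₂ > 0`. -/
def ClassAtilde (Q : QuivRel) (st : SigmaTau Q) : Prop :=
  IsGentle Q ∧ ∃ m1 m2 p q : ℕ, 0 < p + m1 ∧ 0 < q + m2 ∧
    ∀ x, fInv Q st x =
      (m1 + m2) * charFn 0 3 x + charFn (p + m1) p x + charFn (q + m2) q x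

/-- Isomorphism of quivers with relations. -/
def IsoQR (Q Q' : QuivRel) : Prop :=
  ∃ fV fA : ℕ → ℕ,
    Set.BijOn fV ↑Q.V ↑Q'.V ∧ Set.BijOn fA ↑Q.A ↑Q'.A ∧
    (∀ a ∈ Q.A, Q'.src (fA a) = fV (Q.src a) ∧ Q'.tgt (fA a) = fV (Q.tgt a)) ∧
    (∀ a ∈ Q.A, ∀ b ∈ Q.A, ((a, b) ∈ Q.rel ↔ (fA a, fA b) ∈ Q'.rel))

/-- The quiver has no loops. -/
def NoLoops (Q : QuivRel) : Prop := ∀ a ∈ Q.A, Q.src a ≠ Q.tgt a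

/-- The reflection at `x` is defined: every arrow starting at `x` admits a
(necessarily unique) companion arrow ending at `x` not bound by a relation. -/
def CanReflect (Q : QuivRel) (x : ℕ) : Prop :=
  x ∈ Q.V ∧ ∀ a ∈ Q.A, Q.src a = x → ∃ b ∈ Q.A, Q.tgt b = x ∧ (a, b) ∉ Q.rel

/-- `Q'` is the reflection of the gentle loop-free quiver `Q` at the vertex
`x`, following Brenner–Butler tilting. -/
def IsReflection (Q : QuivRel) (x : ℕ) (Q' : QuivRel) : Prop :=
  IsGentle Q ∧ NoLoops Q ∧ CanReflect Q x ∧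
  Q'.V = Q.V ∧ Q'.A = Q.A ∧
  (∀ a ∈ Q.A, Q.tgt a = x → Q'.src a = x ∧ Q'.tgt a = Q.src a) ∧
  (∀ a ∈ Q.A, Q.src a = x →
    ∀ b ∈ Q.A, Q.tgt b = x → (a, b) ∉ Q.rel → Q'.src a = Q.src b) ∧
  (∀ a ∈ Q.A, Q.tgt a ≠ x → Q.src a ≠ x → Q'.src a = Q.src a) ∧
  (∀ a ∈ Q.A, Q.tgt a ≠ x →
    ((∃ b ∈ Q.A, Q.tgt b = x ∧ Q.src b = Q.tgt a ∧ (b, a) ∈ Q.rel) → Q'.tgt a = x) ∧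
    ((¬ ∃ b ∈ Q.A, Q.tgt b = x ∧ Q.src b = Q.tgt a ∧ (b, a) ∈ Q.rel) →
      Q'.tgt a = Q.tgt a)) ∧
  (∀ a b : ℕ, (a, b) ∈ Q'.rel ↔
    (((a, b) ∈ Q.rel ∧ Q.tgt a ≠ x ∧ Q.src a ≠ x) ∨
     (a ∈ Q.A ∧ b ∈ Q.A ∧ Q.src a = x ∧ Q.tgt b = x ∧ (a, b) ∉ Q.rel) ∨
     (a ∈ Q.A ∧ b ∈ Q.A ∧ Q.tgt a = x ∧
       ∃ c ∈ Q.A, c ≠ a ∧ Q.tgt c = x ∧ Q.src c = Q.tgt b ∧ (c, b) ∈ Q.rel)))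

/-- The opposite quiver with relations. -/
def opQR (Q : QuivRel) : QuivRel where
  V := Q.V
  A := Q.A
  src := Q.tgt
  tgt := Q.src
  rel := Q.rel.image fun ρ => (ρ.2, ρ.1)

/-- Coreflection: the dual of reflection. -/
def IsCoreflection (Q : QuivRel) (x : ℕ) (Q' : QuivRel) : Prop :=
  IsReflection (opQR Q) x (opQR Q')

/-- One step of reflection equivalence: a reflection, a coreflection, or an
isomorphism of quivers with relations. -/
def RefStep (Q Q' : QuivRel) : Prop :=
  (∃ x, IsReflection Q x Q') ∨ (∃ x, IsCoreflection Q x Q') ∨ IsoQR Q Q'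

/-- Reflection equivalence: a finite sequence of reflections/coreflections,
up to isomorphism of quivers with relations. -/
def RefEquiv : QuivRel → QuivRel → Prop := Relation.ReflTransGen RefStep

/-- A cyclic orientation of a `1`-cycle quiver without branch arrows (i.e. a
cycle): enumerations of the vertices and arrows by `ZMod n` such that the
`i`-th arrow joins the `i`-th and `(i+1)`-st vertices. -/
structure CyclicOrientation (Q : QuivRel) (n : ℕ) where
  ev : ZMod n → ℕ
  ea : ZMod n → ℕ
  ev_mem : ∀ i, ev i ∈ Q.V
  ea_mem : ∀ i, ea i ∈ Q.A
  ev_inj : Function.Injective ev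
  ea_inj : Function.Injective ea
  ev_surj : ∀ v ∈ Q.V, ∃ i, ev i = v
  ea_surj : ∀ a ∈ Q.A, ∃ i, ea i = a
  compat : ∀ i : ZMod n,
    (Q.src (ea i) = ev i ∧ Q.tgt (ea i) = ev (i + 1)) ∨
    (Q.src (ea i) = ev (i + 1) ∧ Q.tgt (ea i) = ev i)

/-- Clockwise arrow with respect to a cyclic orientation. -/
def Clockwise (Q : QuivRel) {n : ℕ} (co : CyclicOrientation Q n) (a : ℕ) : Prop :=
  a ∈ Q.A ∧ ∃ i : ZMod n, co.ea i = a ∧ Q.src a = co.ev i ∧ Q.tgt a = co.ev (i + 1)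

/-- Anticlockwise arrow with respect to a cyclic orientation. -/
def Anticlockwise (Q : QuivRel) {n : ℕ} (co : CyclicOrientation Q n) (a : ℕ) : Prop :=
  a ∈ Q.A ∧ ∃ i : ZMod n, co.ea i = a ∧ Q.src a = co.ev (i + 1) ∧ Q.tgt a = co.ev i

end GentleQuiv

namespace GentleQuiv

lemma rel_mem {Q : QuivRel} (hg : IsGentle Q) {a b : ℕ} (h : (a, b) ∈ Q.rel) :
    a ∈ Q.A ∧ b ∈ Q.A ∧ Q.src a = Q.tgt b := by
  obtain ⟨-, -, -, h4, -⟩ := hg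
  exact h4 (a, b) h

lemma rel_fun {Q : QuivRel} (hg : IsGentle Q) {a b b' : ℕ} (h : (a, b) ∈ Q.rel)
    (h' : (a, b') ∈ Q.rel) : b = b' := by
  have m := rel_mem hg h
  have m' := rel_mem hg h'
  obtain ⟨-, -, -, -, -, -, -, -, -, h4, -⟩ := hg
  exact Finset.card_le_one.1 (h4 a m.1) b (by simp [m.2.1, h]) b' (by simp [m'.2.1, h'])

lemma rel_inj {Q : QuivRel} (hg : IsGentle Q) {a a' b : ℕ} (h : (a, b) ∈ Q.rel)
    (h' : (a', b) ∈ Q.rel) : a = a' := by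
  have m := rel_mem hg h
  have m' := rel_mem hg h'
  obtain ⟨-, -, -, -, -, -, -, -, h4, -, -⟩ := hg
  exact Finset.card_le_one.1 (h4 b m.2.1) a (by simp [m.1, h]) a' (by simp [m'.1, h'])

lemma tau_inj {Q : QuivRel} (st : SigmaTau Q) {a b : ℕ} (ha : a ∈ Q.A) (hb : b ∈ Q.A)
    (h : Q.tgt a = Q.tgt b) (h' : st.τ a = st.τ b) : a = b := by
  by_contra hne
  have := st.τ_tgt a ha b hb hne h
  have := st.τ_pm b hb
  omega

lemma sigma_inj {Q : QuivRel} (st : SigmaTau Q) {a b : ℕ} (ha : a ∈ Q.A) (hb : b ∈ Q.A)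
    (h : Q.src a = Q.src b) (h' : st.σ a = st.σ b) : a = b := by
  by_contra hne
  have := st.σ_src a ha b hb hne h
  have := st.σ_pm b hb
  omega

lemma chain_unique {Q : QuivRel} (hg : IsGentle Q) : ∀ (l1 l2 : List ℕ) (a : ℕ),
    (a :: l1).IsChain (fun a b => (a, b) ∈ Q.rel) →
    (a :: l2).IsChain (fun a b => (a, b) ∈ Q.rel) →
    (∀ b, ((a :: l1).getLast (by simp), b) ∉ Q.rel) →
    (∀ b, ((a :: l2).getLast (by simp), b) ∉ Q.rel) → l1 = l2 := by
  intro l1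
  induction l1 with
  | nil =>
    intro l2 a h1 h2 e1 e2
    cases l2 with
    | nil => rfl
    | cons y l =>
      rw [List.isChain_cons_cons] at h2
      exact absurd h2.1 (e1 y)
  | cons x l1 ih =>
    intro l2 a h1 h2 e1 e2
    cases l2 with
    | nil =>
      rw [List.isChain_cons_cons] at h1
      exact absurd h1.1 (e2 x)
    | cons y l =>
      rw [List.isChain_cons_cons] at h1 h2
      obtain rfl := rel_fun hg h1.1 h2.1
      rw [ih l x h1.2 h2.2 (by simpa using e1) (by simpa using e2)]

lemma chain_nodup {Q : QuivRel} (hg : IsGentle Q) : ∀ (l : List ℕ),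
    l.IsChain (fun a b => (a, b) ∈ Q.rel) →
    (∀ (h : l ≠ []), ∀ b, (l.getLast h, b) ∉ Q.rel) → l.Nodup := by
  intro l
  induction l with
  | nil => simp
  | cons x l ih =>
    intro h e
    have hl : l.Nodup := by
      refine ih h.tail ?_
      intro hne b
      have := e (by simp) b
      rwa [List.getLast_cons hne] at this
    refine List.nodup_cons.2 ⟨?_, hl⟩
    intro hx
    obtain ⟨s, t, rfl⟩ := List.append_of_mem hx
    have h2 : (x :: t).IsChain (fun a b => (a, b) ∈ Q.rel) :=
      List.IsChain.suffix h ⟨x :: s, by simp⟩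
    have := chain_unique hg _ _ x h h2 (e (by simp)) (by
      intro b
      have := e (by simp) b
      simpa using this)
    have := congrArg List.length this
    simp at this
    omega

lemma exists_max {Q : QuivRel} (hg : IsGentle Q) (st : SigmaTau Q) (a : ℕ)
    (hend : ∀ b, (a, b) ∉ Q.rel) : ∀ (n : ℕ) (l : List ℕ), Q.A.card - l.length = n →
    (∀ x ∈ l, x ∈ Q.A) → l.IsChain (fun a b => (a, b) ∈ Q.rel) → l.getLast? = some a →
    ∃ l, InN Q st (.arrows l) ∧ a ∈ l := by
  intro n
  induction n with
  | zero =>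
    intro l hn hA hc hla
    cases l with
    | nil => simp at hla
    | cons y l =>
    have hlast : ∀ b, ((y :: l).getLast (by simp), b) ∉ Q.rel := by
      rw [List.getLast?_eq_some_getLast (by simp)] at hla
      simp only [Option.some.injEq] at hla
      rwa [hla]
    have hy : a ∈ y :: l := List.mem_of_getLast? hla
    refine ⟨y :: l, ⟨⟨by simp, hA, hc⟩, ?_, ?_⟩, hy⟩
    · rintro ⟨x, hx, h1, h2⟩
      simp [Thread.target, Thread.tauAnti] at h1 h2
      have hr : (x, y) ∈ Q.rel := (st.rel_iff x hx y (hA y (by simp)) h1).2 h2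
      have hnd := chain_nodup hg (x :: y :: l) (List.isChain_cons_cons.2 ⟨hr, hc⟩) (by
        intro _; simpa using hlast)
      have : (x :: y :: l).toFinset ⊆ Q.A := by
        intro z hz
        simp only [List.mem_toFinset, List.mem_cons] at hz
        rcases hz with rfl | hz
        · exact hx
        · exact hA z (by simpa using hz)
      have := Finset.card_le_card this
      rw [List.toFinset_card_of_nodup hnd] at this
      simp at this hn
      omega
    · rintro ⟨x, hx, h1, h2⟩
      have : (y :: l).getLast! = a := by
        rw [List.getLast!_eq_getLast?_getD, hla]; rfl
      simp only [Thread.source, Thread.sigma, this] at h1 h2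
      exact hend x ((st.rel_iff a (hA a hy) x hx h1.symm).2 h2.symm)
  | succ n ih =>
    intro l hn hA hc hla
    cases l with
    | nil => simp at hla
    | cons y l =>
    have hy : a ∈ y :: l := List.mem_of_getLast? hla
    by_cases hex : ∃ x ∈ Q.A, (x, y) ∈ Q.rel
    · obtain ⟨x, hx, hr⟩ := hex
      refine ih (x :: y :: l) ?_ ?_ (List.isChain_cons_cons.2 ⟨hr, hc⟩) ?_
      · simp at hn ⊢; omega
      · intro z hz
        rcases List.mem_cons.1 hz with rfl | hz
        · exact hx
        · exact hA z hz
      · simpa using hla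
    · refine ⟨y :: l, ⟨⟨by simp, hA, hc⟩, ?_, ?_⟩, hy⟩
      · rintro ⟨x, hx, h1, h2⟩
        simp [Thread.target, Thread.tauAnti] at h1 h2
        exact hex ⟨x, hx, (st.rel_iff x hx y (hA y (by simp)) h1).2 h2⟩
      · rintro ⟨x, hx, h1, h2⟩
        have : (y :: l).getLast! = a := by
          rw [List.getLast!_eq_getLast?_getD, hla]; rfl
        simp only [Thread.source, Thread.sigma, this] at h1 h2
        exact hend x ((st.rel_iff a (hA a hy) x hx h1.symm).2 h2.symm)

/-- Every arrow of `𝒞` has a successor, which lies in `𝒞` again. -/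
lemma inC_succ {Q : QuivRel} (hg : IsGentle Q) (st : SigmaTau Q) {a : ℕ} (ha : InC Q st a) :
    ∃ b, InC Q st b ∧ (a, b) ∈ Q.rel := by
  by_cases h : ∃ b, (a, b) ∈ Q.rel
  · obtain ⟨b, hb⟩ := h
    refine ⟨b, ⟨(rel_mem hg hb).2.1, ?_⟩, hb⟩
    rintro ⟨l, hl, hbl⟩
    obtain ⟨s, t, rfl⟩ := List.append_of_mem hbl
    have hab := (st.rel_iff a ha.1 b (rel_mem hg hb).2.1 (rel_mem hg hb).2.2).1 hb
    obtain ⟨⟨h1, h2, h3⟩, h4, h5⟩ := hl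
    rcases List.eq_nil_or_concat s with rfl | ⟨s, c, rfl⟩
    · apply h4
      refine ⟨a, ha.1, ?_, ?_⟩
      · simpa [Thread.target] using (rel_mem hg hb).2.2
      · simpa [Thread.tauAnti] using hab
    · have hcb : (c, b) ∈ Q.rel := by
        have : [c, b].IsChain (fun a b => (a, b) ∈ Q.rel) :=
          List.IsChain.infix h3 ⟨s, t, by simp⟩
        simpa using this
      obtain rfl := rel_inj hg hb hcb
      exact ha.2 ⟨_, ⟨⟨h1, h2, h3⟩, h4, h5⟩, by simp⟩
  · push Not at h
    exact absurd (exists_max hg st a h _ [a] rfl (by simpa using ha.1) (by simp) (by simp)) ha.2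

/-- A maximal antipath is determined by its target and its sign there. -/
lemma inN_inj {Q : QuivRel} (hg : IsGentle Q) (st : SigmaTau Q) {w w' : Thread}
    (h : InN Q st w) (h' : InN Q st w') (ht : w.target Q = w'.target Q)
    (hs : w.tauAnti st = w'.tauAnti st) : w = w' := by
  have key : ∀ (x : ℕ) (e : ℤ) (l : List ℕ), InN Q st (.triv x e) → InN Q st (.arrows l) →
      x = (Thread.arrows l).target Q → e = (Thread.arrows l).tauAnti st → False := by
    intro x e l h1 h2 h3 h4
    obtain ⟨⟨h5, h6, h7⟩, -, -⟩ := h2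
    cases l with
    | nil => exact h5 rfl
    | cons y l =>
      apply h1.2.2
      refine ⟨y, h6 y (by simp), ?_, ?_⟩
      · simpa [Thread.target, Thread.source] using h3.symm
      · simpa [Thread.tauAnti, Thread.sigma] using h4.symm
  have e : ∀ (y : ℕ) (l : List ℕ), InN Q st (.arrows (y :: l)) →
      ∀ b, ((y :: l).getLast (by simp), b) ∉ Q.rel := by
    intro y l hN b hb
    apply hN.2.2
    have hm := rel_mem hg hb
    have : (y :: l).getLast! = (y :: l).getLast (by simp) := rfl
    refine ⟨b, hm.2.1, ?_, ?_⟩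
    · simp only [Thread.source, this]; exact hm.2.2.symm
    · simp only [Thread.sigma, this]; exact ((st.rel_iff _ hm.1 b hm.2.1 hm.2.2).1 hb).symm
  cases w with
  | triv x ε =>
    cases w' with
    | triv x' ε' =>
      simp only [Thread.target, Thread.tauAnti] at ht hs
      rw [ht, hs]
    | arrows l' => exact (key _ _ _ h h' ht hs).elim
  | arrows l =>
    cases w' with
    | triv x' ε' => exact (key _ _ _ h' h ht.symm hs.symm).elim
    | arrows l' =>
      cases l with
      | nil => exact absurd rfl h.1.1
      | cons y l =>
      cases l' with
      | nil => exact absurd rfl h'.1.1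
      | cons y' l' =>
      simp [Thread.target, Thread.tauAnti] at ht hs
      obtain rfl := tau_inj st (h.1.2.1 y (by simp)) (h'.1.2.1 y' (by simp)) ht hs
      rw [chain_unique hg l l' y h.1.2.2 h'.1.2.2 (e _ _ h) (e _ _ h')]

lemma inN_data {Q : QuivRel} (hg : IsGentle Q) (st : SigmaTau Q) {w : Thread}
    (h : InN Q st w) : w.target Q ∈ Q.V ∧ (w.tauAnti st = 1 ∨ w.tauAnti st = -1) := by
  cases w with
  | triv x ε => exact h.1
  | arrows l =>
    cases l with
    | nil => exact absurd rfl h.1.1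
    | cons y l =>
      have hy := h.1.2.1 y (by simp)
      exact ⟨(hg.2.1 y hy).2, st.τ_pm y hy⟩

lemma inN_finite {Q : QuivRel} (hg : IsGentle Q) (st : SigmaTau Q) :
    {w | InN Q st w}.Finite := by
  refine Set.Finite.of_finite_image (f := fun w => (w.target Q, w.tauAnti st))
    (Set.Finite.subset (Q.V ×ˢ ({1, -1} : Finset ℤ)).finite_toSet ?_) ?_
  · rintro _ ⟨w, hw, rfl⟩
    have := inN_data hg st hw
    simpa using this
  · intro w hw w' hw' h
    simp only [Prod.mk.injEq] at h
    exact inN_inj hg st hw hw' h.1 h.2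

/-- `|𝒩| + |Δ₁| ≤ 2 |Δ₀|`. -/
lemma card_N {Q : QuivRel} (hg : IsGentle Q) (st : SigmaTau Q) (N : Finset Thread)
    (hN : ∀ w, w ∈ N ↔ InN Q st w) : N.card + Q.A.card ≤ 2 * Q.V.card := by
  classical
  have h1 : (N.image fun w => (w.target Q, w.tauAnti st)).card = N.card := by
    refine Finset.card_image_of_injOn ?_
    intro w hw w' hw' h
    simp only [Prod.mk.injEq] at h
    exact inN_inj hg st ((hN w).1 hw) ((hN w').1 hw') h.1 h.2
  have h2 : (Q.A.image fun a => (Q.src a, st.σ a)).card = Q.A.card := by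
    refine Finset.card_image_of_injOn ?_
    intro w hw w' hw' h
    simp only [Prod.mk.injEq] at h
    exact sigma_inj st hw hw' h.1 h.2
  have hd : Disjoint (N.image fun w => (w.target Q, w.tauAnti st))
      (Q.A.image fun a => (Q.src a, st.σ a)) := by
    rw [Finset.disjoint_left]
    intro z hz hz'
    obtain ⟨w, hw, rfl⟩ := Finset.mem_image.1 hz
    obtain ⟨a, ha, h⟩ := Finset.mem_image.1 hz'
    simp only [Prod.mk.injEq] at h
    exact ((hN w).1 hw).2.1 ⟨a, ha, h.1, h.2⟩
  have hs : (N.image fun w => (w.target Q, w.tauAnti st)) ∪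
      (Q.A.image fun a => (Q.src a, st.σ a)) ⊆ Q.V ×ˢ ({1, -1} : Finset ℤ) := by
    intro z hz
    rcases Finset.mem_union.1 hz with hz | hz
    · obtain ⟨w, hw, rfl⟩ := Finset.mem_image.1 hz
      have := inN_data hg st ((hN w).1 hw)
      simpa using this
    · obtain ⟨a, ha, rfl⟩ := Finset.mem_image.1 hz
      have := st.σ_pm a ha
      have := (hg.2.1 a ha).1
      simp; tauto
  have := Finset.card_le_card hs
  rw [Finset.card_union_of_disjoint hd, h1, h2, Finset.card_product] at this
  simp at this
  omega

/-- `|Δ₁| ≤ |𝒞| + ∑_{ω ∈ 𝒩} ℓ(ω)`. -/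
lemma card_A {Q : QuivRel} (st : SigmaTau Q) (N : Finset Thread)
    (hN : ∀ w, w ∈ N ↔ InN Q st w) (C : Finset ℕ) (hC : ∀ a, a ∈ C ↔ InC Q st a) :
    Q.A.card ≤ C.card + ∑ w ∈ N, w.len := by
  classical
  let ar : Thread → Finset ℕ := fun w => match w with
    | .triv _ _ => ∅
    | .arrows l => l.toFinset
  have har : ∀ w, (ar w).card ≤ w.len := by
    intro w
    cases w with
    | triv x e => simp [ar]
    | arrows l => exact List.toFinset_card_le l
  have hs : Q.A ⊆ C ∪ N.biUnion ar := by
    intro a ha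
    by_cases h : InC Q st a
    · exact Finset.mem_union_left _ ((hC a).2 h)
    · have : ∃ l : List ℕ, InN Q st (.arrows l) ∧ a ∈ l := by
        by_contra h'; exact h ⟨ha, h'⟩
      obtain ⟨l, hl, hal⟩ := this
      refine Finset.mem_union_right _ (Finset.mem_biUnion.2 ⟨_, (hN _).2 hl, ?_⟩)
      simpa [ar] using hal
  calc Q.A.card ≤ _ := Finset.card_le_card hs
    _ ≤ _ := Finset.card_union_le _ _
    _ ≤ _ := by
      have h1 := Finset.card_biUnion_le (s := N) (t := ar)
      have h2 := Finset.sum_le_sum (s := N) (fun w _ => har w)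
      omega

/-! ### Connectivity -/

lemma adj_symm {Q : QuivRel} {x y : ℕ} (h : Adj Q x y) : Adj Q y x := by
  obtain ⟨a, ha, h⟩ := h
  exact ⟨a, ha, h.symm⟩

lemma reach_symm {Q : QuivRel} {x y : ℕ} (h : Relation.ReflTransGen (Adj Q) x y) :
    Relation.ReflTransGen (Adj Q) y x := by
  induction h with
  | refl => exact .refl
  | tail _ h ih => exact Relation.ReflTransGen.head (adj_symm h) ih

lemma connected_delete {Q : QuivRel} (h : Connected Q) (S : Finset ℕ)
    (hS : ∀ a ∈ S, a ∈ Q.A →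
      Relation.ReflTransGen (Adj (deleteArrows Q S)) (Q.src a) (Q.tgt a)) :
    Connected (deleteArrows Q S) := by
  intro x hx y hy
  have := h x hx y hy
  clear hx hy
  induction this with
  | refl => exact .refl
  | tail _ h ih =>
    refine ih.trans ?_
    obtain ⟨a, ha, h⟩ := h
    by_cases haS : a ∈ S
    · rcases h with ⟨rfl, rfl⟩ | ⟨rfl, rfl⟩
      · exact hS a haS ha
      · exact reach_symm (hS a haS ha)
    · exact .single ⟨a, by simp [deleteArrows, ha, haS], h⟩

lemma reach_triangle {Q : QuivRel} {a b c : ℕ} (S : Finset ℕ) (hb : b ∈ Q.A) (hc : c ∈ Q.A)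
    (hbS : b ∉ S) (hcS : c ∉ S) (h1 : Q.src a = Q.tgt b) (h2 : Q.src b = Q.tgt c)
    (h3 : Q.src c = Q.tgt a) :
    Relation.ReflTransGen (Adj (deleteArrows Q S)) (Q.src a) (Q.tgt a) := by
  refine (Relation.ReflTransGen.single (b := Q.src b) ?_).trans (.single ?_)
  · exact ⟨b, by simp [deleteArrows, hb, hbS], Or.inr ⟨rfl, h1.symm⟩⟩
  · exact ⟨c, by simp [deleteArrows, hc, hcS], Or.inr ⟨h3, h2.symm⟩⟩

lemma connected_card {Q : QuivRel} (hne : Q.V.Nonempty)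
    (hV : ∀ a ∈ Q.A, Q.src a ∈ Q.V ∧ Q.tgt a ∈ Q.V) (h : Connected Q) :
    Q.V.card ≤ Q.A.card + 1 := by
  classical
  let G : SimpleGraph Q.V := SimpleGraph.fromRel (fun x y => Adj Q x y)
  have hG : G.Connected := by
    haveI : Nonempty Q.V := ⟨⟨_, hne.choose_spec⟩⟩
    refine SimpleGraph.Connected.mk ?_
    rintro ⟨x, hx⟩ ⟨y, hy⟩
    have hxy := h x hx y hy
    have : ∀ (z : ℕ), Relation.ReflTransGen (Adj Q) x z → ∃ hz : z ∈ Q.V,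
        G.Reachable ⟨x, hx⟩ ⟨z, hz⟩ := by
      intro z hz
      induction hz with
      | refl => exact ⟨hx, SimpleGraph.Reachable.refl _⟩
      | @tail u v _ huv ih =>
        obtain ⟨hu, hr⟩ := ih
        have hv : v ∈ Q.V := by
          obtain ⟨a, ha, ⟨-, rfl⟩ | ⟨rfl, -⟩⟩ := huv
          · exact (hV a ha).2
          · exact (hV a ha).1
        refine ⟨hv, ?_⟩
        by_cases he : u = v
        · subst he; exact hr
        · refine hr.trans (SimpleGraph.Adj.reachable ?_)
          rw [SimpleGraph.fromRel_adj]
          exact ⟨by simpa using he, Or.inl huv⟩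
    exact (this y hxy).2
  have h1 := hG.card_vert_le_card_edgeSet_add_one
  have h2 : Nat.card G.edgeSet ≤ Q.A.card := by
    have hsub : G.edgeSet ⊆ (fun a : Q.A => (s(⟨Q.src a, (hV a a.2).1⟩, ⟨Q.tgt a, (hV a a.2).2⟩) :
        Sym2 Q.V)) '' Set.univ := by
      intro e he
      induction e using Sym2.ind with
      | _ x y =>
      rw [SimpleGraph.mem_edgeSet, SimpleGraph.fromRel_adj] at he
      have hadj : Adj Q x y := he.2.elim id adj_symm
      obtain ⟨a, ha, h⟩ := hadj
      refine ⟨⟨a, ha⟩, trivial, ?_⟩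
      rw [Sym2.eq_iff]
      rcases h with h | h
      · left; exact ⟨Subtype.ext h.1, Subtype.ext h.2⟩
      · right; exact ⟨Subtype.ext h.1, Subtype.ext h.2⟩
    calc Nat.card G.edgeSet = G.edgeSet.ncard := rfl
      _ ≤ _ := Set.ncard_le_ncard hsub (Set.toFinite _)
      _ ≤ _ := Set.ncard_image_le (Set.toFinite _)
      _ = _ := by simp [Set.ncard_univ]
  rw [Nat.card_eq_fintype_card, Fintype.card_coe] at h1
  omega

/-! ### Orbits of `Ψ` -/

lemma psi_iff {Q : QuivRel} (hg : IsGentle Q) (st : SigmaTau Q) {a b : ℕ} :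
    PsiRel Q st a b ↔ InC Q st a ∧ InC Q st b ∧ (a, b) ∈ Q.rel := by
  constructor
  · rintro ⟨h1, h2, h3, h4⟩
    exact ⟨h1, h2, (st.rel_iff a h1.1 b h2.1 h3.symm).2 h4.symm⟩
  · rintro ⟨h1, h2, h3⟩
    have := (rel_mem hg h3).2.2
    exact ⟨h1, h2, this.symm, ((st.rel_iff a h1.1 b h2.1 this).1 h3).symm⟩

lemma orbit_three {Q : QuivRel} (hg : IsGentle Q) (st : SigmaTau Q) (g : ℕ → ℕ)
    (hgC : ∀ a, InC Q st a → InC Q st (g a) ∧ (a, g a) ∈ Q.rel) {a : ℕ} (ha : InC Q st a)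
    (h3 : {b | Relation.EqvGen (PsiRel Q st) a b}.ncard = 3) :
    g (g (g a)) = a ∧ a ≠ g a ∧ g a ≠ g (g a) ∧ a ≠ g (g a) ∧
    {b | Relation.EqvGen (PsiRel Q st) a b} = {a, g a, g (g a)} := by
  classical
  let G : {a // InC Q st a} → {a // InC Q st a} := fun x => ⟨g x, (hgC x x.2).1⟩
  haveI : Finite {a // InC Q st a} :=
    Set.Finite.subset Q.A.finite_toSet (fun x (hx : InC Q st x) => hx.1)
  have hGi : Function.Injective G := by
    intro x y hxy
    have h : g x = g y := congrArg Subtype.val hxy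
    have h1 := (hgC x x.2).2
    have h2 := (hgC y y.2).2
    rw [h] at h1
    exact Subtype.ext (rel_inj hg h1 h2)
  let x : {a // InC Q st a} := ⟨a, ha⟩
  have hx : x ∈ Function.periodicPts G := hGi.mem_periodicPts x
  have hpos := Function.minimalPeriod_pos_of_mem_periodicPts hx
  set n := Function.minimalPeriod G x with hn
  have hper : G^[n] x = x := Function.iterate_minimalPeriod
  have hE : {b | Relation.EqvGen (PsiRel Q st) a b} =
      (fun i => (G^[i] x : ℕ)) '' Set.Iio n := by
    have hall : ∀ i, ∃ j ∈ Set.Iio n, (G^[j] x : ℕ) = G^[i] x := by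
      intro i
      refine ⟨i % n, Nat.mod_lt _ hpos, ?_⟩
      rw [hn, Function.iterate_mod_minimalPeriod_eq]
    ext b
    constructor
    · intro hb
      have : ∀ u v, Relation.EqvGen (PsiRel Q st) u v →
          ((∃ i, (G^[i] x : ℕ) = u) ↔ (∃ i, (G^[i] x : ℕ) = v)) := by
        intro u v huv
        induction huv with
        | rel u v h =>
          rw [psi_iff hg] at h
          constructor
          · rintro ⟨i, rfl⟩
            refine ⟨i + 1, ?_⟩
            rw [Function.iterate_succ_apply']
            exact rel_fun hg (hgC _ (G^[i] x).2).2 h.2.2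
          · rintro ⟨i, rfl⟩
            refine ⟨i + (n - 1), ?_⟩
            have h1 : G (G^[i + (n-1)] x) = G^[i] x := by
              rw [← Function.iterate_succ_apply' G]
              have : (i + (n - 1)).succ = i + n := by omega
              rw [this, Function.iterate_add_apply, hper]
            have h2 := (hgC _ (G^[i + (n-1)] x).2).2
            have h3 : g (G^[i + (n-1)] x) = G^[i] x := congrArg Subtype.val h1
            rw [h3] at h2
            exact rel_inj hg h2 h.2.2
        | refl => exact Iff.rfl
        | symm _ _ _ ih => exact ih.symm
        | trans _ _ _ _ _ ih1 ih2 => exact ih1.trans ih2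
      obtain ⟨i, rfl⟩ := (this a b hb).1 ⟨0, rfl⟩
      obtain ⟨j, hj, hji⟩ := hall i
      exact ⟨j, hj, hji⟩
    · rintro ⟨i, -, rfl⟩
      show Relation.EqvGen (PsiRel Q st) a _
      induction i with
      | zero => exact Relation.EqvGen.refl _
      | succ i ih =>
        refine ih.trans _ _ _ (Relation.EqvGen.rel _ _ ?_)
        beta_reduce
        rw [Function.iterate_succ_apply', psi_iff hg]
        exact ⟨(G^[i] x).2, (G (G^[i] x)).2, (hgC _ (G^[i] x).2).2⟩
  have hinj : Set.InjOn (fun i => (G^[i] x : ℕ)) (Set.Iio n) := by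
    intro i hi j hj hij
    exact Function.iterate_injOn_Iio_minimalPeriod hi hj (Subtype.ext hij)
  have hn3 : n = 3 := by
    rw [hE, Set.ncard_image_of_injOn hinj] at h3
    simpa using h3
  have e0 : (G^[0] x : ℕ) = a := rfl
  have e1 : (G^[1] x : ℕ) = g a := rfl
  have e2 : (G^[2] x : ℕ) = g (g a) := rfl
  have e3 : (G^[3] x : ℕ) = g (g (g a)) := rfl
  rw [hn3] at hinj hE hper
  refine ⟨?_, ?_, ?_, ?_, ?_⟩
  · rw [← e3, hper]
  · intro h
    exact absurd (hinj (show 0 ∈ Set.Iio 3 by simp) (show 1 ∈ Set.Iio 3 by simp) h) (by simp)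
  · intro h
    exact absurd (hinj (show 1 ∈ Set.Iio 3 by simp) (show 2 ∈ Set.Iio 3 by simp) h) (by simp)
  · intro h
    exact absurd (hinj (show 0 ∈ Set.Iio 3 by simp) (show 2 ∈ Set.Iio 3 by simp) h) (by simp)
  · rw [hE]
    have : Set.Iio 3 = ({0, 1, 2} : Set ℕ) := by
      ext i; simp; omega
    rw [this, Set.image_insert_eq, Set.image_pair]
    rfl

/-- Numerical consequences of membership in the class `𝒜`. -/
lemma classA_data {Q : QuivRel} (st : SigmaTau Q) (hA : ClassA Q st) :
    ∃ m p : ℕ, (∀ a, InC Q st a → {b | Relation.EqvGen (PsiRel Q st) a b}.ncard = 3) ∧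
      {O | COrbit Q st O}.ncard = m ∧ {w | InN Q st w}.ncard = p + m + 2 ∧
      ∃ N : Finset Thread, (∀ w, w ∈ N ↔ InN Q st w) ∧ ∑ w ∈ N, w.len = p := by
  classical
  obtain ⟨hg, m, p, hf⟩ := hA
  have hNf := inN_finite hg st
  have hCf : {a | InC Q st a}.Finite :=
    Set.Finite.subset Q.A.finite_toSet (fun x (hx : InC Q st x) => hx.1)
  have hNsub : ∀ w, InN Q st w → {w' | Relation.EqvGen (PhiRel Q st) w w'} ⊆ {w | InN Q st w} := by
    intro w hw
    have : ∀ u v, Relation.EqvGen (PhiRel Q st) u v → (InN Q st u ↔ InN Q st v) := by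
      intro u v h
      induction h with
      | rel u v h => exact ⟨fun _ => h.2.1, fun _ => h.1⟩
      | refl => exact Iff.rfl
      | symm _ _ _ ih => exact ih.symm
      | trans _ _ _ _ _ ih1 ih2 => exact ih1.trans ih2
    intro v hv
    exact (this w v hv).1 hw
  have hCsub : ∀ w, InC Q st w → {w' | Relation.EqvGen (PsiRel Q st) w w'} ⊆ {w | InC Q st w} := by
    intro w hw
    have : ∀ u v, Relation.EqvGen (PsiRel Q st) u v → (InC Q st u ↔ InC Q st v) := by
      intro u v h
      induction h with
      | rel u v h => exact ⟨fun _ => h.2.1, fun _ => h.1⟩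
      | refl => exact Iff.rfl
      | symm _ _ _ ih => exact ih.symm
      | trans _ _ _ _ _ ih1 ih2 => exact ih1.trans ih2
    intro v hv
    exact (this w v hv).1 hw
  have hNOf : {O | NOrbit Q st O}.Finite := by
    refine (hNf.image (fun w => {w' | Relation.EqvGen (PhiRel Q st) w w'})).subset ?_
    rintro O ⟨w, hw, rfl⟩
    exact ⟨w, hw, rfl⟩
  have hCOf : {O | COrbit Q st O}.Finite := by
    refine (hCf.image (fun w => {w' | Relation.EqvGen (PsiRel Q st) w w'})).subset ?_
    rintro O ⟨w, hw, rfl⟩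
    exact ⟨w, hw, rfl⟩
  have hpos : ∀ O, NOrbit Q st O → 0 < pN O := by
    rintro O ⟨w, hw, rfl⟩
    exact (Set.ncard_pos (hNf.subset (hNsub w hw))).2 ⟨w, Relation.EqvGen.refl _⟩
  -- all C-orbits have three elements
  have hC3 : ∀ O, COrbit Q st O → O.ncard = 3 := by
    intro O hO
    have h1 : 0 < {O' : Set ℕ | COrbit Q st O' ∧ (0, O.ncard).1 = 0 ∧
        O'.ncard = (0, O.ncard).2}.ncard :=
      (Set.ncard_pos (hCOf.subset (fun _ h => h.1))).2 ⟨O, hO, rfl, rfl⟩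
    have h2 := hf (0, O.ncard)
    by_contra hne
    have e1 : charFn 0 3 (0, O.ncard) = 0 := by simp [charFn, hne]
    have e2 : charFn (p + m + 2) p (0, O.ncard) = 0 := by
      rw [charFn, if_neg]; simp
    rw [e1, e2] at h2
    unfold fInv at h2
    omega
  have hN1 : ∀ O, NOrbit Q st O → pN O = p + m + 2 ∧ qN O = p := by
    intro O hO
    have h0 := hpos O hO
    have h1 : 0 < {O' : Set Thread | NOrbit Q st O' ∧ pN O' = (pN O, qN O).1 ∧
        qN O' = (pN O, qN O).2}.ncard :=
      (Set.ncard_pos (hNOf.subset (fun _ h => h.1))).2 ⟨O, hO, rfl, rfl⟩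
    have h2 := hf (pN O, qN O)
    by_contra hne
    have e1 : charFn 0 3 (pN O, qN O) = 0 := by
      rw [charFn, if_neg]; simp; omega
    have e2 : charFn (p + m + 2) p (pN O, qN O) = 0 := by
      rw [charFn, if_neg]; simpa using hne
    rw [e1, e2] at h2
    unfold fInv at h2
    omega
  have hCm : {O | COrbit Q st O}.ncard = m := by
    have h2 := hf (0, 3)
    have e1 : charFn 0 3 (0, 3) = 1 := by simp [charFn]
    have e2 : charFn (p + m + 2) p (0, 3) = 0 := by
      rw [charFn, if_neg]; simp
    have e3 : {O : Set Thread | NOrbit Q st O ∧ pN O = (0, 3).1 ∧ qN O = (0, 3).2} = ∅ := by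
      ext O
      simp only [Set.mem_setOf_eq, Set.mem_empty_iff_false, iff_false]
      rintro ⟨h, h', -⟩
      have := hpos O h
      omega
    have e4 : {O : Set ℕ | COrbit Q st O ∧ ((0, 3) : ℕ × ℕ).1 = 0 ∧
        O.ncard = ((0, 3) : ℕ × ℕ).2} = {O | COrbit Q st O} := by
      ext O
      exact ⟨fun h => h.1, fun h => ⟨h, rfl, hC3 O h⟩⟩
    unfold fInv at h2
    rw [e1, e2, e3, e4] at h2
    simpa using h2
  have hNone : {O | NOrbit Q st O}.ncard = 1 := by
    have h2 := hf (p + m + 2, p)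
    have e1 : charFn 0 3 (p + m + 2, p) = 0 := by
      rw [charFn, if_neg]; simp
    have e2 : charFn (p + m + 2) p (p + m + 2, p) = 1 := by simp [charFn]
    have e3 : {O : Set ℕ | COrbit Q st O ∧ ((p + m + 2, p) : ℕ × ℕ).1 = 0 ∧
        O.ncard = ((p + m + 2, p) : ℕ × ℕ).2} = ∅ := by
      ext O
      simp
    have e4 : {O : Set Thread | NOrbit Q st O ∧ pN O = ((p + m + 2, p) : ℕ × ℕ).1 ∧
        qN O = ((p + m + 2, p) : ℕ × ℕ).2} = {O | NOrbit Q st O} := by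
      ext O
      exact ⟨fun h => h.1, fun h => ⟨h, hN1 O h⟩⟩
    unfold fInv at h2
    rw [e1, e2, e3, e4] at h2
    simpa using h2
  obtain ⟨O, hO⟩ := Set.ncard_eq_one.1 hNone
  have hO1 : NOrbit Q st O := by
    have : O ∈ {O | NOrbit Q st O} := by rw [hO]; rfl
    exact this
  have hON : O = {w | InN Q st w} := by
    apply Set.Subset.antisymm
    · obtain ⟨w, hw, rfl⟩ := hO1
      exact hNsub w hw
    · intro w hw
      have : {w' | Relation.EqvGen (PhiRel Q st) w w'} ∈ {O | NOrbit Q st O} := ⟨w, hw, rfl⟩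
      rw [hO] at this
      rw [← Set.mem_singleton_iff.1 this]
      exact Relation.EqvGen.refl _
  obtain ⟨h1, h2⟩ := hN1 O hO1
  refine ⟨m, p, fun a ha => hC3 _ ⟨a, ha, rfl⟩, hCm, ?_, hNf.toFinset, by simp, ?_⟩
  · rw [← hON]; exact h1
  · rw [← h2, qN, hON, finsum_mem_eq_finite_toFinset_sum _ hNf]

/-- The converse implication. -/
lemma no_branch_of_completion {Q : QuivRel} (hg : IsGentle Q) {Q'' Qc : QuivRel}
    (st'' : SigmaTau Q'') {γ : ℕ × ℕ → ℕ} (hg'' : IsGentle Q'')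
    (hI : ∀ ρ ∈ Q''.rel, Isolated Q'' st'' ρ) (hc : IsCompletion Q'' Q''.rel γ Qc)
    (hiso : IsoQR Qc Q) : ∀ ρ : ℕ × ℕ, ¬ BranchRel Q ρ := by
  have hne : ∀ a b, (a, b) ∈ Q''.rel → a ≠ b := by
    rintro a b h rfl
    have hm := rel_mem hg'' h
    apply (hI _ h).2.2.1
    exact ⟨a, hm.1, hm.2.2, (st''.rel_iff a hm.1 a hm.1 hm.2.2).1 h⟩
  -- every relation of the completion lies in a triangle
  have htri : ∀ a b, (a, b) ∈ Qc.rel → ∃ c, Is3Cycle Qc a b c := by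
    intro a b hab
    have main : ∀ a b, (a, b) ∈ Q''.rel → Is3Cycle Qc a b (γ (a, b)) := by
      intro a b h
      have hm := rel_mem hg'' h
      have hf := hc.fresh _ h
      refine ⟨?_, ?_, ?_, hne a b h, ?_, ?_, ?_, ?_, ?_⟩
      · rw [hc.A_eq]; exact Finset.mem_union_left _ hm.1
      · rw [hc.A_eq]; exact Finset.mem_union_left _ hm.2.1
      · rw [hc.A_eq]; exact Finset.mem_union_right _ (Finset.mem_image_of_mem _ h)
      · intro h'; rw [← h'] at hf; exact hf hm.2.1
      · intro h'; rw [← h'] at hf; exact hf hm.1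
      · rw [hc.src_old a hm.1, hc.tgt_old b hm.2.1]; exact hm.2.2
      · rw [hc.tgt_new _ h, hc.src_old b hm.2.1]
      · rw [hc.src_new _ h, hc.tgt_old a hm.1]
    rw [hc.rel_eq, Finset.mem_union, Finset.mem_union] at hab
    rcases hab with (h | h) | h
    · exact ⟨_, main a b h⟩
    · obtain ⟨⟨x, y⟩, hr, he⟩ := Finset.mem_image.1 h
      simp only [Prod.mk.injEq] at he
      obtain ⟨rfl, rfl⟩ := he
      obtain ⟨h1, h2, h3, h4, h5, h6, h7, h8, h9⟩ := main _ _ hr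
      exact ⟨y, h3, h1, h2, h6.symm, h4, h5.symm, h9, h7, h8⟩
    · obtain ⟨⟨x, y⟩, hr, he⟩ := Finset.mem_image.1 h
      simp only [Prod.mk.injEq] at he
      obtain ⟨rfl, rfl⟩ := he
      obtain ⟨h1, h2, h3, h4, h5, h6, h7, h8, h9⟩ := main _ _ hr
      exact ⟨x, h2, h3, h1, h5, h6.symm, h4.symm, h8, h9, h7⟩
  obtain ⟨fV, fA, bV, bA, hst, hrel⟩ := hiso
  have htriQ : ∀ a b, (a, b) ∈ Q.rel → ∃ c, Is3Cycle Q a b c := by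
    intro a b hab
    have hm := rel_mem hg hab
    obtain ⟨a', ha', rfl⟩ := bA.surjOn hm.1
    obtain ⟨b', hb', rfl⟩ := bA.surjOn hm.2.1
    have ha'' : a' ∈ Qc.A := ha'
    have hb'' : b' ∈ Qc.A := hb'
    obtain ⟨c, h1, h2, h3, h4, h5, h6, h7, h8, h9⟩ := htri a' b' ((hrel a' ha'' b' hb'').2 hab)
    refine ⟨fA c, hm.1, hm.2.1, bA.mapsTo h3, ?_, ?_, ?_, hm.2.2, ?_, ?_⟩
    · exact fun h => h4 (bA.injOn h1 h2 h)
    · exact fun h => h5 (bA.injOn h2 h3 h)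
    · exact fun h => h6 (bA.injOn h1 h3 h)
    · rw [(hst b' h2).1, (hst c h3).2, h8]
    · rw [(hst c h3).1, (hst a' h1).2, h9]
  rintro ⟨a, b⟩ ⟨hr, hb⟩
  obtain ⟨c, h1, h2, h3, h4, h5, h6, h7, h8, h9⟩ := htriQ a b hr
  have hcon := hg.2.2.1
  rcases hb with hb | hb
  · apply hb.2
    refine connected_delete hcon _ ?_
    intro x hx _
    obtain rfl := Finset.mem_singleton.1 hx
    exact reach_triangle _ h2 h3 (by simpa using h4.symm) (by simpa using h6.symm) h7 h8 h9
  · apply hb.2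
    refine connected_delete hcon _ ?_
    intro x hx _
    obtain rfl := Finset.mem_singleton.1 hx
    exact reach_triangle _ h3 h1 (by simpa using h5.symm) (by simpa using h4) h8 h9 h7

/-- Deleting arrows keeps a gentle quiver gentle if the result is connected. -/
lemma gentle_delete {Q : QuivRel} (hg : IsGentle Q) (S : Finset ℕ)
    (hcon : Connected (deleteArrows Q S)) : IsGentle (deleteArrows Q S) := by
  obtain ⟨h1, h2, h3, h4, h5, h6, h7, h8, h9, h10, n, h11⟩ := hg
  have hsub : ∀ a, a ∈ (deleteArrows Q S).A → a ∈ Q.A ∧ a ∉ S := by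
    intro a ha; simpa [deleteArrows] using ha
  have hr : ∀ a b, a ∉ S → b ∉ S → ((a, b) ∈ (deleteArrows Q S).rel ↔ (a, b) ∈ Q.rel) := by
    intro a b ha hb; simp [deleteArrows, ha, hb]
  have hr' : ∀ a b, (a, b) ∈ (deleteArrows Q S).rel → (a, b) ∈ Q.rel := by
    intro a b h
    exact (Finset.mem_filter.1 h).1
  refine ⟨h1, fun a ha => h2 a (hsub a ha).1, hcon, ?_, ?_, ?_, ?_, ?_, ?_, ?_, n, ?_⟩
  · intro ρ hρ
    obtain ⟨hρ, hS⟩ := Finset.mem_filter.1 hρ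
    obtain ⟨e1, e2, e3⟩ := h4 ρ hρ
    exact ⟨by simp [deleteArrows, e1, hS.1], by simp [deleteArrows, e2, hS.2], e3⟩
  · intro x
    refine (Finset.card_le_card ?_).trans (h5 x)
    intro a ha
    rw [Finset.mem_filter] at ha ⊢
    exact ⟨(hsub a ha.1).1, ha.2⟩
  · intro x
    refine (Finset.card_le_card ?_).trans (h6 x)
    intro a ha
    rw [Finset.mem_filter] at ha ⊢
    exact ⟨(hsub a ha.1).1, ha.2⟩
  · intro x hx
    refine (Finset.card_le_card ?_).trans (h7 x (hsub x hx).1)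
    intro a ha
    rw [Finset.mem_filter] at ha ⊢
    rw [hr _ _ (hsub a ha.1).2 (hsub x hx).2] at ha
    exact ⟨(hsub a ha.1).1, ha.2⟩
  · intro x hx
    refine (Finset.card_le_card ?_).trans (h8 x (hsub x hx).1)
    intro a ha
    rw [Finset.mem_filter] at ha ⊢
    rw [hr _ _ (hsub x hx).2 (hsub a ha.1).2] at ha
    exact ⟨(hsub a ha.1).1, ha.2⟩
  · intro x hx
    refine (Finset.card_le_card ?_).trans (h9 x (hsub x hx).1)
    intro a ha
    rw [Finset.mem_filter] at ha ⊢
    exact ⟨(hsub a ha.1).1, hr' _ _ ha.2⟩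
  · intro x hx
    refine (Finset.card_le_card ?_).trans (h10 x (hsub x hx).1)
    intro a ha
    rw [Finset.mem_filter] at ha ⊢
    exact ⟨(hsub a ha.1).1, hr' _ _ ha.2⟩
  · rintro l ⟨l1, l2, l3⟩ hl
    obtain ⟨a, b, hab, hin⟩ := h11 l ⟨l1, fun a ha => (hsub a (l2 a ha)).1, l3⟩ hl
    refine ⟨a, b, ?_, hin⟩
    have ha := (hsub a (l2 a (hin.subset (by simp)))).2
    have hb := (hsub b (l2 b (hin.subset (by simp)))).2
    exact (hr a b ha hb).2 hab

/-- Restriction of the sign functions to the quiver with arrows deleted. -/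
def restrictST {Q : QuivRel} (st : SigmaTau Q) (S : Finset ℕ) :
    SigmaTau (deleteArrows Q S) where
  σ := st.σ
  τ := st.τ
  σ_pm a ha := st.σ_pm a (Finset.mem_sdiff.1 ha).1
  τ_pm a ha := st.τ_pm a (Finset.mem_sdiff.1 ha).1
  σ_src a ha b hb := st.σ_src a (Finset.mem_sdiff.1 ha).1 b (Finset.mem_sdiff.1 hb).1
  τ_tgt a ha b hb := st.τ_tgt a (Finset.mem_sdiff.1 ha).1 b (Finset.mem_sdiff.1 hb).1
  rel_iff a ha b hb h := by
    rw [← st.rel_iff a (Finset.mem_sdiff.1 ha).1 b (Finset.mem_sdiff.1 hb).1 h]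
    have h1 := (Finset.mem_sdiff.1 ha).2
    have h2 := (Finset.mem_sdiff.1 hb).2
    simp [deleteArrows, h1, h2]

/-- The direct implication. -/
lemma completion_of_no_branch {Q : QuivRel} (st : SigmaTau Q) (hA : ClassA Q st)
    (hB : ∀ ρ : ℕ × ℕ, ¬ BranchRel Q ρ) :
    ∃ (Q'' Qc : QuivRel) (st'' : SigmaTau Q'') (γ : ℕ × ℕ → ℕ),
        IsGentle Q'' ∧ TreeType Q'' ∧
        (∀ ρ ∈ Q''.rel, Isolated Q'' st'' ρ) ∧
        IsCompletion Q'' Q''.rel γ Qc ∧ IsoQR Qc Q := by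
  classical
  have hg := hA.1
  obtain ⟨m, p, hC3, hCm, hNc, N, hN, hNp⟩ := classA_data st hA
  have hNc' : N.card = p + m + 2 := by
    rw [← hNc, ← Set.ncard_coe_finset]
    congr 1
    ext w
    exact hN w
  have hex : ∀ a, ∃ b, InC Q st a → InC Q st b ∧ (a, b) ∈ Q.rel := by
    intro a
    by_cases h : InC Q st a
    · obtain ⟨b, hb⟩ := inC_succ hg st h
      exact ⟨b, fun _ => hb⟩
    · exact ⟨0, fun h' => absurd h' h⟩
  choose g hgC using hex
  have horb := fun a ha => orbit_three hg st g hgC (a := a) ha (hC3 a ha)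
  let E : ℕ → Set ℕ := fun a => {b | Relation.EqvGen (PsiRel Q st) a b}
  have hEeq : ∀ a b, b ∈ E a → E b = E a := by
    intro a b hb
    have hb : Relation.EqvGen (PsiRel Q st) a b := hb
    ext c
    exact ⟨fun h => hb.trans _ _ _ h, fun h => (hb.symm _ _).trans _ _ _ h⟩
  have hEself : ∀ a, a ∈ E a := fun a => Relation.EqvGen.refl _
  have hE3 : ∀ a, InC Q st a → E a = {a, g a, g (g a)} := fun a ha => (horb a ha).2.2.2.2
  let r : ℕ → ℕ := fun a => sInf (E a)
  have hrE : ∀ a, r a ∈ E a := fun a => Nat.sInf_mem ⟨a, hEself a⟩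
  have hrg : ∀ a, InC Q st a → r (g a) = r a := by
    intro a ha
    have : E (g a) = E a := hEeq a (g a) (by rw [hE3 a ha]; simp)
    simp only [r, this]
  let C : Finset ℕ := Q.A.filter (fun a => InC Q st a)
  have hC : ∀ a, a ∈ C ↔ InC Q st a := by
    intro a
    simp only [C, Finset.mem_filter]
    exact ⟨fun h => h.2, fun h => ⟨h.1, h⟩⟩
  let S : Finset ℕ := C.filter (fun a => r a = a)
  have hS : ∀ a, a ∈ S ↔ InC Q st a ∧ r a = a := by
    intro a
    simp only [S, Finset.mem_filter, hC]
  -- exactly one arrow of each triangle lies in `S`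
  have hone : ∀ a, InC Q st a → (a ∈ S ∨ g a ∈ S ∨ g (g a) ∈ S) := by
    intro a ha
    have h1 := (hgC a ha).1
    have h2 := (hgC _ h1).1
    have := hrE a
    rw [hE3 a ha] at this
    simp only [Set.mem_insert_iff, Set.mem_singleton_iff] at this
    rcases this with h | h | h
    · left; rw [hS]; exact ⟨ha, h⟩
    · right; left; rw [hS]; exact ⟨h1, by rw [hrg a ha, h]⟩
    · right; right; rw [hS]; exact ⟨h2, by rw [hrg _ h1, hrg a ha, h]⟩
  have hnot : ∀ a, a ∈ S → g a ∉ S ∧ g (g a) ∉ S := by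
    intro a haS
    obtain ⟨ha, hra⟩ := (hS a).1 haS
    have h1 := (hgC a ha).1
    obtain ⟨-, d1, d2, d3, -⟩ := horb a ha
    constructor
    · intro h
      have := ((hS _).1 h).2
      rw [hrg a ha, hra] at this
      exact d1 this
    · intro h
      have := ((hS _).1 h).2
      rw [hrg _ h1, hrg a ha, hra] at this
      exact d3 this
  -- `|S| = m`
  have hSm : S.card = m := by
    have hinj : Set.InjOn E (S : Set ℕ) := by
      intro a ha b hb hab
      have ha := ((hS a).1 ha).2
      have hb := ((hS b).1 hb).2
      rw [← ha, ← hb]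
      simp only [r, hab]
    have himg : E '' (S : Set ℕ) = {O | COrbit Q st O} := by
      ext O
      constructor
      · rintro ⟨a, ha, rfl⟩
        exact ⟨a, ((hS a).1 ha).1, rfl⟩
      · rintro ⟨a, ha, rfl⟩
        have h1 := (hgC a ha).1
        rcases hone a ha with h | h | h
        · exact ⟨a, h, rfl⟩
        · exact ⟨g a, h, hEeq a _ (by rw [hE3 a ha]; simp)⟩
        · exact ⟨g (g a), h, hEeq a _ (by rw [hE3 a ha]; simp)⟩
    rw [← hCm, ← himg, Set.ncard_image_of_injOn hinj, Set.ncard_coe_finset]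
  have hCcard : C.card ≤ 3 * S.card := by
    have hsub : C ⊆ S ∪ S.image g ∪ S.image (fun a => g (g a)) := by
      intro a ha
      have ha := (hC a).1 ha
      have h3 := (horb a ha).1
      simp only [Finset.mem_union, Finset.mem_image]
      rcases hone a ha with h | h | h
      · exact Or.inl (Or.inl h)
      · exact Or.inr ⟨g a, h, h3⟩
      · exact Or.inl (Or.inr ⟨_, h, h3⟩)
    have h0 := Finset.card_le_card hsub
    have h1 := Finset.card_union_le (S ∪ S.image g) (S.image (fun a => g (g a)))
    have h2 := Finset.card_union_le S (S.image g)
    have h3 := Finset.card_image_le (s := S) (f := g)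
    have h4 := Finset.card_image_le (s := S) (f := fun a => g (g a))
    omega
  have hcN := card_N hg st N hN
  have hcA := card_A st N hN C hC
  have hSA : S ⊆ Q.A := fun a ha => ((hS a).1 ha).1.1
  have hSle := Finset.card_le_card hSA
  -- deleting `S` keeps the quiver connected
  have hconS : Connected (deleteArrows Q S) := by
    refine connected_delete hg.2.2.1 _ ?_
    intro a haS _
    have ha := ((hS a).1 haS).1
    have h1 := hgC a ha
    have h2 := hgC _ h1.1
    have h3 := hgC _ h2.1
    rw [(horb a ha).1] at h3
    exact reach_triangle _ h1.1.1 h2.1.1 (hnot a haS).1 (hnot a haS).2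
      (rel_mem hg h1.2).2.2 (rel_mem hg h2.2).2.2 (rel_mem hg h3.2).2.2
  have hcard1 := connected_card (Q := deleteArrows Q S) hg.1
    (fun a ha => hg.2.1 a (Finset.mem_sdiff.1 ha).1) hconS
  have hAc : (deleteArrows Q S).A.card = Q.A.card - S.card := Finset.card_sdiff_of_subset hSA
  have hVc : (deleteArrows Q S).V.card = Q.V.card := rfl
  rw [hAc, hVc] at hcard1
  -- cycle arrows lie in `𝒞`
  have hcyc : ∀ a ∈ Q.A, ¬ BranchArrow Q a → InC Q st a := by
    intro a ha hbr
    by_contra hna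
    have hcon : Connected (deleteArrows Q {a}) := by
      by_contra h; exact hbr ⟨ha, h⟩
    have haS : a ∉ S := fun h => hna ((hS a).1 h).1
    have hcon2 : Connected (deleteArrows (deleteArrows Q {a}) S) := by
      refine connected_delete hcon _ ?_
      intro b hbS _
      have hb := ((hS b).1 hbS).1
      have h1 := hgC b hb
      have h2 := hgC _ h1.1
      have h3 := hgC _ h2.1
      rw [(horb b hb).1] at h3
      have hne : ∀ x, InC Q st x → x ∈ (deleteArrows Q {a}).A := by
        intro x hx
        refine Finset.mem_sdiff.2 ⟨hx.1, ?_⟩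
        rw [Finset.mem_singleton]
        rintro rfl
        exact hna hx
      exact reach_triangle (Q := deleteArrows Q {a}) _ (hne _ h1.1) (hne _ h2.1)
        (hnot b hbS).1 (hnot b hbS).2
        (rel_mem hg h1.2).2.2 (rel_mem hg h2.2).2.2 (rel_mem hg h3.2).2.2
    have hcard2 := connected_card (Q := deleteArrows (deleteArrows Q {a}) S) hg.1
      (fun b hb => hg.2.1 b (Finset.mem_sdiff.1 (Finset.mem_sdiff.1 hb).1).1) hcon2
    have hsub : S ⊆ Q.A \ {a} := by
      intro b hb
      refine Finset.mem_sdiff.2 ⟨hSA hb, ?_⟩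
      rw [Finset.mem_singleton]
      rintro rfl
      exact haS hb
    have e1 : (deleteArrows (deleteArrows Q {a}) S).A.card = Q.A.card - 1 - S.card := by
      show ((Q.A \ {a}) \ S).card = _
      rw [Finset.card_sdiff_of_subset hsub, Finset.card_sdiff_of_subset (by simpa using ha)]
      simp
    have e2 : (deleteArrows (deleteArrows Q {a}) S).V.card = Q.V.card := rfl
    rw [e1, e2] at hcard2
    have e3 := Finset.card_le_card hsub
    rw [Finset.card_sdiff_of_subset (by simpa using ha)] at e3
    simp at e3
    have e4 : 0 < Q.A.card := Finset.card_pos.2 ⟨a, ha⟩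
    omega
  have hrelC : ∀ a b, (a, b) ∈ Q.rel → InC Q st a ∧ b = g a := by
    intro a b hab
    have hm := rel_mem hg hab
    have ha : InC Q st a := hcyc a hm.1 (fun h => hB (a, b) ⟨hab, Or.inl h⟩)
    exact ⟨ha, rel_fun hg hab (hgC a ha).2⟩
  have hrel'' : ∀ a b, (a, b) ∈ (deleteArrows Q S).rel ↔ (a, b) ∈ Q.rel ∧ a ∉ S ∧ b ∉ S := by
    intro a b; simp [deleteArrows]
  have hginj : ∀ a b, InC Q st a → InC Q st b → g a = g b → a = b := by
    intro a b ha hb h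
    rw [← (horb a ha).1, ← (horb b hb).1, h]
  -- the relation opposite to an arrow of `S`
  have hopp : ∀ s ∈ S, (g s, g (g s)) ∈ (deleteArrows Q S).rel := by
    intro s hs
    have h1 := hgC s ((hS s).1 hs).1
    rw [hrel'']
    exact ⟨(hgC _ h1.1).2, hnot s hs⟩
  refine ⟨deleteArrows Q S, Q, restrictST st S, fun ρ => g ρ.2, gentle_delete hg S hconS,
    ?_, ?_, ?_, ?_⟩
  · unfold TreeType
    rw [hAc, hVc]
    omega
  · rintro ⟨a, b⟩ hab
    obtain ⟨hr, haS, hbS⟩ := (hrel'' a b).1 hab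
    obtain ⟨ha, rfl⟩ := hrelC a b hr
    have hm := rel_mem hg hr
    have h1 := hgC a ha
    have h2 := hgC _ h1.1
    have h3 := hgC _ h2.1
    rw [(horb a ha).1] at h3
    have hcS : g (g a) ∈ S := by
      rcases hone a ha with h | h | h
      · exact absurd h haS
      · exact absurd h hbS
      · exact h
    refine ⟨hab, ⟨by simp, ?_, List.isChain_pair.2 hab⟩, ?_, ?_⟩
    · intro x hx
      simp only [List.mem_cons, List.not_mem_nil, or_false] at hx
      rcases hx with rfl | rfl
      · exact Finset.mem_sdiff.2 ⟨hm.1, haS⟩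
      · exact Finset.mem_sdiff.2 ⟨hm.2.1, hbS⟩
    · rintro ⟨x, hx, hx1, hx2⟩
      obtain ⟨hxA, hxS⟩ := Finset.mem_sdiff.1 hx
      have hxa : (x, a) ∈ Q.rel := (st.rel_iff x hxA a hm.1 hx1).2 hx2
      rw [rel_inj hg hxa h3.2] at hxS
      exact hxS hcS
    · rintro ⟨x, hx, hx1, hx2⟩
      obtain ⟨hxA, hxS⟩ := Finset.mem_sdiff.1 hx
      have hxa : (g a, x) ∈ Q.rel := (st.rel_iff _ hm.2.1 x hxA hx1.symm).2 hx2.symm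
      rw [rel_fun hg hxa h2.2] at hxS
      exact hxS hcS
  · have hthird : ∀ a b, (a, b) ∈ (deleteArrows Q S).rel →
        InC Q st a ∧ b = g a ∧ g b ∈ S := by
      intro a b hab
      obtain ⟨hr, haS, hbS⟩ := (hrel'' a b).1 hab
      obtain ⟨ha, rfl⟩ := hrelC a b hr
      refine ⟨ha, rfl, ?_⟩
      rcases hone a ha with h | h | h
      · exact absurd h haS
      · exact absurd h hbS
      · exact h
    constructor
    · exact Finset.Subset.refl _
    · rintro ⟨a, b⟩ hab h
      exact (Finset.mem_sdiff.1 h).2 (hthird a b hab).2.2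
    · rintro ⟨a, b⟩ hab ⟨a', b'⟩ hab' h
      obtain ⟨ha, rfl, -⟩ := hthird a b hab
      obtain ⟨ha', rfl, -⟩ := hthird a' b' hab'
      have := hginj _ _ (hgC a ha).1 (hgC a' ha').1 h
      have := hginj _ _ ha ha' this
      rw [this]
    · rfl
    · ext x
      simp only [Finset.mem_union, Finset.mem_image, Prod.exists]
      constructor
      · intro hx
        by_cases hxS : x ∈ S
        · exact Or.inr ⟨_, _, hopp x hxS, (horb x ((hS x).1 hxS).1).1⟩
        · exact Or.inl (Finset.mem_sdiff.2 ⟨hx, hxS⟩)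
      · rintro (h | ⟨a, b, hab, rfl⟩)
        · exact (Finset.mem_sdiff.1 h).1
        · exact hSA (hthird a b hab).2.2
    · intro a _; rfl
    · intro a _; rfl
    · rintro ⟨a, b⟩ hab
      obtain ⟨ha, rfl, -⟩ := hthird a b hab
      have h1 := hgC a ha
      have h2 := hgC _ h1.1
      have h3 := hgC _ h2.1
      rw [(horb a ha).1] at h3
      exact (rel_mem hg h3.2).2.2
    · rintro ⟨a, b⟩ hab
      obtain ⟨ha, rfl, -⟩ := hthird a b hab
      exact (rel_mem hg (hgC _ (hgC a ha).1).2).2.2.symm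
    · ext ⟨x, y⟩
      simp only [Finset.mem_union, Finset.mem_image, Prod.exists, Prod.mk.injEq]
      constructor
      · intro hxy
        obtain ⟨hx, rfl⟩ := hrelC x y hxy
        have h1 := hgC x hx
        have h3 := (horb x hx).1
        by_cases hxS : x ∈ S
        · exact Or.inl (Or.inr ⟨_, _, hopp x hxS, h3, rfl⟩)
        · by_cases hyS : g x ∈ S
          · refine Or.inr ⟨_, _, hopp _ hyS, h3, ?_⟩
            rw [h3]
          · exact Or.inl (Or.inl ((hrel'' _ _).2 ⟨hxy, hxS, hyS⟩))
      · rintro ((h | ⟨a, b, hab, rfl, rfl⟩) | ⟨a, b, hab, rfl, rfl⟩)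
        · exact ((hrel'' _ _).1 h).1
        · obtain ⟨ha, rfl, -⟩ := hthird a b hab
          have h3 := hgC _ (hgC _ (hgC a ha).1).1
          rw [(horb a ha).1] at h3
          exact h3.2
        · obtain ⟨ha, rfl, -⟩ := hthird a b hab
          exact (hgC _ (hgC a ha).1).2
  · exact ⟨id, id, Set.bijOn_id _, Set.bijOn_id _, fun a _ => ⟨rfl, rfl⟩,
      fun a _ b _ => Iff.rfl⟩

/-- For `𝚫 ∈ 𝒜`: `𝚫` has no branch relations iff `𝚫` is
isomorphic to the quiver obtained from a gentle quiver `𝚫''` of tree type, all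
of whose relations are isolated, by completing all of its relations. -/
theorem stmt11 (Q : QuivRel) (st : SigmaTau Q) (hA : ClassA Q st) :
    (∀ ρ : ℕ × ℕ, ¬ BranchRel Q ρ) ↔
      ∃ (Q'' Qc : QuivRel) (st'' : SigmaTau Q'') (γ : ℕ × ℕ → ℕ),
        IsGentle Q'' ∧ TreeType Q'' ∧
        (∀ ρ ∈ Q''.rel, Isolated Q'' st'' ρ) ∧
        IsCompletion Q'' Q''.rel γ Qc ∧ IsoQR Qc Q := by
  constructor
  · exact completion_of_no_branch st hA
  · rintro ⟨Q'', Qc, st'', γ, h1, -, h3, h4, h5⟩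
    exact no_branch_of_completion hA.1 st'' h1 h3 h4 h5

end GentleQuiv
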